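/- arXiv:1310.1868 — 3 statements merged into one kernel-verified Lean document; each statement's English description precedes it below -/
import Mathlib

section
/- For every real number t and every r > 0, the function f(r) := arsinh(e^t · r) satisfies f''(r) + f'(r)/r = e^t / (r · (1 + e^{2t} r²)^{3/2}); equivalently, (e^{-2t} + r²) · (f''(r) + f'(r)/r) = 1/(e^{2t} r² √(1 + e^{-2t} r^{-2})). -/
open Real

/-!
Write `a = e^t` and `w = √(1 + a² r²)`. Then `f' = a / w` and `f'' = -a³ r / w³`, so
`f'' + f' / r = a (w² - a² r²) / (r w³) = a / (r w³)`. The second identity follows from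
`e^{-2t} + r² = w² / a²` and `√(1 + e^{-2t} r⁻²) = w / (a r)`, both sides being `1 / (a r w)`.
-/

theorem hasDerivAt_arsinh_const_mul (a s : ℝ) :
    HasDerivAt (fun s : ℝ => Real.arsinh (a * s)) (a / √(1 + (a * s) ^ 2)) s := by
  have h := ((hasDerivAt_id s).const_mul a).arsinh
  simp only [id, mul_one, smul_eq_mul] at h
  convert h using 1
  ring

theorem hasDerivAt_div_sqrt_one_add_sq (a r : ℝ) :
    HasDerivAt (fun s : ℝ => a / √(1 + (a * s) ^ 2))
      (-(a ^ 3 * r) / √(1 + (a * r) ^ 2) ^ 3) r := by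
  have hpos : 0 < 1 + (a * r) ^ 2 := by positivity
  have hw : 0 < √(1 + (a * r) ^ 2) := Real.sqrt_pos.2 hpos
  have h1 : HasDerivAt (fun s : ℝ => 1 + (a * s) ^ 2) (2 * a ^ 2 * r) r := by
    have h := (((hasDerivAt_id r).const_mul a).pow 2).const_add 1
    exact h.congr_deriv (by simp; ring)
  have h2 := (hasDerivAt_const r a).div (h1.sqrt hpos.ne') hw.ne'
  refine h2.congr_deriv ?_
  field_simp
  ring

/-- Radial Laplacian computation for the distance function on Hamilton's cigar:
for `f(r) = arsinh (e^t r)` and `r > 0` one has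
`f''(r) + f'(r)/r = e^t / (r (1 + e^{2t} r²)^{3/2})`, and equivalently
`(e^{-2t} + r²)(f''(r) + f'(r)/r) = 1 / (e^{2t} r² √(1 + e^{-2t} r^{-2}))`. -/
theorem cigar_radial_laplacian (t : ℝ) (r : ℝ) (hr : 0 < r) :
    (deriv (deriv fun s : ℝ => Real.arsinh (Real.exp t * s)) r
        + deriv (fun s : ℝ => Real.arsinh (Real.exp t * s)) r / r
      = Real.exp t / (r * (1 + Real.exp (2 * t) * r ^ 2) ^ ((3 : ℝ) / 2)))
    ∧ (Real.exp (-2 * t) + r ^ 2) *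
        (deriv (deriv fun s : ℝ => Real.arsinh (Real.exp t * s)) r
          + deriv (fun s : ℝ => Real.arsinh (Real.exp t * s)) r / r)
      = 1 / (Real.exp (2 * t) * r ^ 2 * Real.sqrt (1 + Real.exp (-2 * t) * r⁻¹ ^ 2)) := by
  have hd : deriv (fun s : ℝ => Real.arsinh (Real.exp t * s))
      = fun s => Real.exp t / √(1 + (Real.exp t * s) ^ 2) :=
    funext fun s => (hasDerivAt_arsinh_const_mul _ s).deriv
  have hE : Real.exp (2 * t) = Real.exp t ^ 2 := by
    rw [← Real.exp_nat_mul]; norm_num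
  have hE' : Real.exp (-2 * t) = (Real.exp t ^ 2)⁻¹ := by
    rw [← hE, ← Real.exp_neg]; ring_nf
  rw [hd, (hasDerivAt_div_sqrt_one_add_sq _ r).deriv, hE, hE']
  beta_reduce
  have ha : 0 < Real.exp t := Real.exp_pos t
  generalize Real.exp t = a at ha ⊢
  have hpos : 0 < 1 + (a * r) ^ 2 := by positivity
  have hw : 0 < √(1 + (a * r) ^ 2) := Real.sqrt_pos.2 hpos
  have hw2 : √(1 + (a * r) ^ 2) ^ 2 = 1 + (a * r) ^ 2 := Real.sq_sqrt hpos.le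
  have hrpow : (1 + a ^ 2 * r ^ 2) ^ ((3 : ℝ) / 2) = √(1 + (a * r) ^ 2) ^ 3 := by
    rw [← mul_pow, Real.sqrt_eq_rpow, ← Real.rpow_natCast (_ ^ (1 / 2 : ℝ)) 3, ← Real.rpow_mul hpos.le]
    norm_num
  have hsqrt : √(1 + (a ^ 2)⁻¹ * r⁻¹ ^ 2) = √(1 + (a * r) ^ 2) / (a * r) := by
    rw [Real.sqrt_eq_iff_mul_self_eq_of_pos (by positivity), ← sq, div_pow, hw2]
    field_simp
    ring
  rw [hrpow, hsqrt]
  generalize √(1 + (a * r) ^ 2) = w at hw hw2 ⊢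
  have hsum : -(a ^ 3 * r) / w ^ 3 + a / w / r = a / (r * w ^ 3) := by
    field_simp
    linear_combination hw2
  refine ⟨hsum, ?_⟩
  have hconf : (a ^ 2)⁻¹ + r ^ 2 = w ^ 2 / a ^ 2 := by
    rw [hw2]
    field_simp
  rw [hsum, hconf]
  field_simp
end

section
/- Let ρ(t,x) := arsinh(e^t |x|) for t ∈ ℝ and x ∈ ℝ² \ {0}. Then for every t ∈ ℝ and every x ≠ 0, one has ∂ρ/∂t(t,x) + ½ (e^{-2t} + |x|²) Δ_eucl ρ(t, ·)(x) > 1; moreover, for each fixed t this quantity is a strictly decreasing function of |x| whose limit as |x| → ∞ equals 1. -/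
/-!
The drift at `x ≠ 0` depends only on `c = u / √(1 + u²)` with `u = e^t |x|`: the radial formula
`Δ f(|x|) = f'' + f' / r` in the plane gives `∂ρ/∂t = c` and `½ Δ_{g(t)} ρ = ½ (1 / c - c)`, so the
drift is `½ (c + 1 / c)`. As `|x|` runs over `(0, ∞)`, `c` increases strictly through `(0, 1)`
and tends to `1`, whereas `c ↦ ½ (c + 1 / c)` is strictly decreasing on `(0, 1]` with value `1`
at `c = 1`. All three claims follow.
-/

open Filter

/-- The Euclidean Laplacian of a real-valued function on `ℝ²`, defined as the sum of the
second directional derivatives along the standard orthonormal basis. -/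
noncomputable def euclLaplacian (F : EuclideanSpace ℝ (Fin 2) → ℝ)
    (x : EuclideanSpace ℝ (Fin 2)) : ℝ :=
  ∑ i : Fin 2,
    fderiv ℝ (fun y => fderiv ℝ F y (EuclideanSpace.single i (1 : ℝ))) x
      (EuclideanSpace.single i (1 : ℝ))

/-- The parabolic radial drift of Brownian motion on Hamilton's cigar.  With
`ρ(t,x) = arsinh (e^t |x|)` the distance from the origin for the metric
`g(t) = (e^{-2t} + |x|²)^{-1} g_eucl` (whose Laplace–Beltrami operator is
`Δ_{g(t)} = (e^{-2t} + |x|²) Δ_eucl`), this is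
`∂ρ/∂t (t,x) + ½ (e^{-2t} + |x|²) Δ_eucl ρ(t,·)(x)`. -/
noncomputable def cigarDrift (t : ℝ) (x : EuclideanSpace ℝ (Fin 2)) : ℝ :=
  deriv (fun s : ℝ => Real.arsinh (Real.exp s * ‖x‖)) t
    + (1 / 2) * (Real.exp (-2 * t) + ‖x‖ ^ 2) *
        euclLaplacian (fun y => Real.arsinh (Real.exp t * ‖y‖)) x

theorem hasFDerivAt_norm_of_ne_zero {x : EuclideanSpace ℝ (Fin 2)} (hx : x ≠ 0) :
    HasFDerivAt (fun y : EuclideanSpace ℝ (Fin 2) => ‖y‖) (‖x‖⁻¹ • innerSL ℝ x) x := by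
  have hn : ‖x‖ ≠ 0 := norm_ne_zero_iff.mpr hx
  have h := (hasStrictFDerivAt_norm_sq x).hasFDerivAt.sqrt (pow_ne_zero 2 hn)
  simp only [Real.sqrt_sq (norm_nonneg _)] at h
  have hl : ‖x‖⁻¹ • innerSL ℝ x = (1 / (2 * ‖x‖)) • 2 • innerSL ℝ x := by
    rw [two_smul, ← two_smul ℝ (innerSL ℝ x), smul_smul]
    congr 1
    field_simp
  rw [hl]
  exact h

theorem hasFDerivAt_radial {f : ℝ → ℝ} {d : ℝ} {x : EuclideanSpace ℝ (Fin 2)} (hx : x ≠ 0)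
    (hf : HasDerivAt f d ‖x‖) :
    HasFDerivAt (fun y : EuclideanSpace ℝ (Fin 2) => f ‖y‖) (d • ‖x‖⁻¹ • innerSL ℝ x) x :=
  hf.comp_hasFDerivAt x (hasFDerivAt_norm_of_ne_zero hx)

/-- The radial form `f'' + f' / r` of the Laplacian in the plane. -/
theorem euclLaplacian_radial {f f' : ℝ → ℝ} {f'' : ℝ} {x : EuclideanSpace ℝ (Fin 2)} (hx : x ≠ 0)
    (hf : ∀ r, 0 < r → HasDerivAt f (f' r) r) (hf' : HasDerivAt f' f'' ‖x‖) :
    euclLaplacian (fun y => f ‖y‖) x = f'' + f' ‖x‖ / ‖x‖ := by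
  have hn : 0 < ‖x‖ := norm_pos_iff.mpr hx
  have hφ : HasDerivAt (fun r => f' r * r⁻¹) (f'' * ‖x‖⁻¹ + f' ‖x‖ * (-(‖x‖ ^ 2)⁻¹)) ‖x‖ :=
    hf'.mul (hasDerivAt_inv hn.ne')
  have key : ∀ i : Fin 2,
      fderiv ℝ (fun y => fderiv ℝ (fun y : EuclideanSpace ℝ (Fin 2) => f ‖y‖) y
          (EuclideanSpace.single i (1 : ℝ))) x (EuclideanSpace.single i (1 : ℝ))
        = (f'' * ‖x‖⁻¹ + f' ‖x‖ * (-(‖x‖ ^ 2)⁻¹)) * ‖x‖⁻¹ * x i ^ 2 + f' ‖x‖ * ‖x‖⁻¹ := by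
    intro i
    -- The formula `∂ᵢ f(|y|) = (f'(|y|) / |y|) yᵢ` may fail at the origin, which is avoided nearby.
    have he : (fun y => fderiv ℝ (fun y : EuclideanSpace ℝ (Fin 2) => f ‖y‖) y
          (EuclideanSpace.single i (1 : ℝ))) =ᶠ[nhds x] fun y => (f' ‖y‖ * ‖y‖⁻¹) * y i := by
      filter_upwards [isOpen_ne.mem_nhds hx] with y hy
      rw [(hasFDerivAt_radial hy (hf _ (norm_pos_iff.mpr hy))).fderiv]
      simp [EuclideanSpace.inner_single_right]
      ring
    have hc : HasFDerivAt (fun y : EuclideanSpace ℝ (Fin 2) => y i)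
        (EuclideanSpace.proj i : EuclideanSpace ℝ (Fin 2) →L[ℝ] ℝ) x :=
      (EuclideanSpace.proj i : EuclideanSpace ℝ (Fin 2) →L[ℝ] ℝ).hasFDerivAt
    have hm := (hasFDerivAt_radial hx hφ).fun_mul hc
    rw [he.fderiv_eq, hm.fderiv]
    simp [EuclideanSpace.inner_single_right]
    ring
  have hs : ‖x‖ ^ 2 = x 0 ^ 2 + x 1 ^ 2 := by
    rw [EuclideanSpace.real_norm_sq_eq, Fin.sum_univ_two]
  unfold euclLaplacian
  rw [Fin.sum_univ_two, key, key]
  have : ∀ A B : ℝ, A * ‖x‖⁻¹ * x 0 ^ 2 + B + (A * ‖x‖⁻¹ * x 1 ^ 2 + B)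
      = A * ‖x‖⁻¹ * ‖x‖ ^ 2 + 2 * B := by
    intro A B; rw [hs]; ring
  rw [this]
  field_simp
  ring

/-- The quantity `c = tanh ρ = u / √(1 + u²)` at `u = a r`. -/
noncomputable def cigarTanh (a r : ℝ) : ℝ := a * r / √(1 + (a * r) ^ 2)

theorem cigarDrift_eq (t : ℝ) {x : EuclideanSpace ℝ (Fin 2)} (hx : x ≠ 0) :
    cigarDrift t x
      = (cigarTanh (Real.exp t) ‖x‖ + (cigarTanh (Real.exp t) ‖x‖)⁻¹) / 2 := by
  have hn : 0 < ‖x‖ := norm_pos_iff.mpr hx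
  have ha : 0 < Real.exp t := Real.exp_pos t
  have hexp : Real.exp (-2 * t) = (Real.exp t ^ 2)⁻¹ := by
    rw [← Real.exp_nat_mul, ← Real.exp_neg]; congr 1; push_cast; ring
  have ht : deriv (fun s : ℝ => Real.arsinh (Real.exp s * ‖x‖)) t
      = (√(1 + (Real.exp t * ‖x‖) ^ 2))⁻¹ * (Real.exp t * ‖x‖) := by
    simpa using (((Real.hasDerivAt_exp t).mul_const ‖x‖).arsinh).deriv
  unfold cigarDrift
  rw [ht, hexp]
  generalize Real.exp t = a at *
  have hlin : ∀ r : ℝ, HasDerivAt (fun r => a * r) a r := fun r => by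
    simpa using (hasDerivAt_id r).const_mul a
  have hf : ∀ r : ℝ, 0 < r → HasDerivAt (fun r => Real.arsinh (a * r))
      ((√(1 + (a * r) ^ 2))⁻¹ * a) r := fun r _ => by
    simpa using (hlin r).arsinh
  have hpos : 0 < 1 + (a * ‖x‖) ^ 2 := by positivity
  have hf' := (((((hlin ‖x‖).pow 2).const_add 1).sqrt hpos.ne').inv
    (Real.sqrt_pos.mpr hpos).ne').mul_const a
  rw [euclLaplacian_radial (f := fun r => Real.arsinh (a * r))
    (f' := fun r => (√(1 + (a * r) ^ 2))⁻¹ * a) hx hf hf']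
  have hs : 0 < √(1 + (a * ‖x‖) ^ 2) := Real.sqrt_pos.mpr hpos
  have hss : √(1 + (a * ‖x‖) ^ 2) ^ 2 = 1 + (a * ‖x‖) ^ 2 := Real.sq_sqrt hpos.le
  unfold cigarTanh
  simp only [Pi.pow_apply]
  generalize √(1 + (a * ‖x‖) ^ 2) = s at *
  generalize ‖x‖ = r at *
  -- The conformal factor is `s² / a²`.
  have hfac : (a ^ 2)⁻¹ + r ^ 2 = s ^ 2 / a ^ 2 := by rw [hss]; field_simp
  rw [hfac]
  field_simp
  push_cast
  ring

theorem cigarTanh_pos {a r : ℝ} (ha : 0 < a) (hr : 0 < r) : 0 < cigarTanh a r := by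
  unfold cigarTanh; positivity

theorem cigarTanh_sq (a r : ℝ) : cigarTanh a r ^ 2 = 1 - (1 + (a * r) ^ 2)⁻¹ := by
  have hpos : 0 < 1 + (a * r) ^ 2 := by positivity
  rw [cigarTanh, div_pow, Real.sq_sqrt hpos.le]
  field_simp
  ring

theorem cigarTanh_lt_one {a r : ℝ} : cigarTanh a r < 1 := by
  have hpos : 0 < (1 + (a * r) ^ 2)⁻¹ := by positivity
  have := cigarTanh_sq a r
  nlinarith

theorem cigarTanh_lt {a r q : ℝ} (ha : 0 < a) (hr : 0 < r) (hrq : r < q) :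
    cigarTanh a r < cigarTanh a q := by
  refine lt_of_pow_lt_pow_left₀ 2 (cigarTanh_pos ha (hr.trans hrq)).le ?_
  rw [cigarTanh_sq, cigarTanh_sq]
  gcongr

theorem tendsto_cigarTanh {a : ℝ} (ha : 0 < a) :
    Tendsto (cigarTanh a) atTop (nhds 1) := by
  have h1 : Tendsto (fun r : ℝ => 1 + (a * r) ^ 2) atTop atTop :=
    tendsto_atTop_add_const_left _ _
      ((tendsto_pow_atTop two_ne_zero).comp (tendsto_id.const_mul_atTop ha))
  have h2 := (h1.inv_tendsto_atTop.const_sub 1).sqrt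
  simp only [sub_zero, Real.sqrt_one] at h2
  refine h2.congr' ?_
  filter_upwards [eventually_gt_atTop 0] with r hr
  simp only [Pi.inv_apply]
  rw [← cigarTanh_sq, Real.sqrt_sq (cigarTanh_pos ha hr).le]

theorem add_inv_lt_add_inv {c d : ℝ} (hc : 0 < c) (hcd : c < d) (hd : d ≤ 1) :
    d + d⁻¹ < c + c⁻¹ := by
  have hd0 : 0 < d := hc.trans hcd
  have h : c + c⁻¹ - (d + d⁻¹) = (d - c) * (1 - c * d) / (c * d) := by
    field_simp
    ring
  have h1 : 0 < 1 - c * d := by nlinarith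
  have h2 : 0 < (d - c) * (1 - c * d) / (c * d) :=
    div_pos (mul_pos (sub_pos.mpr hcd) h1) (mul_pos hc hd0)
  linarith

/-- On Hamilton's cigar the parabolic radial drift
`∂ρ/∂t + ½ Δ_{g(t)} ρ` of Brownian motion is `> 1` at every `x ≠ 0`; for each fixed `t`
it is a strictly decreasing function of `|x|`, and it tends to `1` as `|x| → ∞`. -/
theorem cigar_drift_bounds :
    (∀ (t : ℝ) (x : EuclideanSpace ℝ (Fin 2)), x ≠ 0 → 1 < cigarDrift t x)
    ∧ (∀ (t : ℝ) (x y : EuclideanSpace ℝ (Fin 2)), x ≠ 0 → y ≠ 0 → ‖x‖ < ‖y‖ →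
        cigarDrift t y < cigarDrift t x)
    ∧ (∀ (t : ℝ) (v : EuclideanSpace ℝ (Fin 2)), ‖v‖ = 1 →
        Tendsto (fun r : ℝ => cigarDrift t (r • v)) atTop (nhds 1)) := by
  refine ⟨fun t x hx => ?_, fun t x y hx hy hxy => ?_, fun t v hv => ?_⟩
  · have h := add_inv_lt_add_inv (cigarTanh_pos (Real.exp_pos t) (norm_pos_iff.mpr hx))
      cigarTanh_lt_one le_rfl
    rw [inv_one] at h
    rw [cigarDrift_eq t hx]
    linarith
  · have h := add_inv_lt_add_inv (cigarTanh_pos (Real.exp_pos t) (norm_pos_iff.mpr hx))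
      (cigarTanh_lt (Real.exp_pos t) (norm_pos_iff.mpr hx) hxy) cigarTanh_lt_one.le
    rw [cigarDrift_eq t hx, cigarDrift_eq t hy]
    linarith
  · have hc := tendsto_cigarTanh (Real.exp_pos t)
    have h := (hc.add (hc.inv₀ one_ne_zero)).div_const 2
    norm_num at h
    refine h.congr' ?_
    filter_upwards [eventually_gt_atTop 0] with r hr
    have hv0 : v ≠ 0 := by
      rintro rfl
      simp at hv
    rw [cigarDrift_eq t (smul_ne_zero hr.ne' hv0), norm_smul, hv, mul_one, Real.norm_of_nonneg hr.le]
end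

section
/- The function u : ℝ × ℝ² → ℝ defined by u(t,x) := (e^{-2t} + |x|²)^{-1} satisfies the partial differential equation ∂u/∂t(t,x) = -½ Δ_x (log u)(t,x) for all (t,x) ∈ ℝ × ℝ²; explicitly, both sides equal 2 e^{-2t} / (e^{-2t} + |x|²)², where Δ_x denotes the Euclidean Laplacian in the space variable and Δ_x (log u)(t,x) = -4 e^{-2t}/(e^{-2t} + |x|²)². -/
lemma cigar_hasFDerivAt_denom (a : ℝ) (y : EuclideanSpace ℝ (Fin 2)) :
    HasFDerivAt (fun z : EuclideanSpace ℝ (Fin 2) => a + ‖z‖ ^ 2) (2 • innerSL ℝ y) y :=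
  (hasStrictFDerivAt_norm_sq y).hasFDerivAt.const_add a

lemma cigar_fderiv_log {a : ℝ} (ha : 0 < a) (y : EuclideanSpace ℝ (Fin 2)) (i : Fin 2) :
    fderiv ℝ (fun z : EuclideanSpace ℝ (Fin 2) => Real.log ((a + ‖z‖ ^ 2)⁻¹)) y
      (EuclideanSpace.single i (1 : ℝ)) = -2 * y i * (a + ‖y‖ ^ 2)⁻¹ := by
  have hw : a + ‖y‖ ^ 2 ≠ 0 := by positivity
  simp only [Real.log_inv]
  rw [((cigar_hasFDerivAt_denom a y).log hw).fun_neg.fderiv]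
  simp [EuclideanSpace.inner_single_right]
  ring

lemma cigar_fderiv_fderiv_log {a : ℝ} (ha : 0 < a) (x : EuclideanSpace ℝ (Fin 2)) (i : Fin 2) :
    fderiv ℝ (fun y => fderiv ℝ
        (fun z : EuclideanSpace ℝ (Fin 2) => Real.log ((a + ‖z‖ ^ 2)⁻¹)) y
        (EuclideanSpace.single i (1 : ℝ))) x (EuclideanSpace.single i (1 : ℝ))
      = -2 / (a + ‖x‖ ^ 2) + 4 * x i ^ 2 / (a + ‖x‖ ^ 2) ^ 2 := by
  have hw : a + ‖x‖ ^ 2 ≠ 0 := by positivity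
  simp only [cigar_fderiv_log ha]
  have hcoord : HasFDerivAt (fun y : EuclideanSpace ℝ (Fin 2) => y i)
      (EuclideanSpace.proj i : EuclideanSpace ℝ (Fin 2) →L[ℝ] ℝ) x :=
    (EuclideanSpace.proj i : EuclideanSpace ℝ (Fin 2) →L[ℝ] ℝ).hasFDerivAt
  have hinv := (hasDerivAt_inv hw).comp_hasFDerivAt x (cigar_hasFDerivAt_denom a x)
  have h := (hcoord.const_mul (-2)).fun_mul hinv
  simp only [Function.comp_def] at h
  rw [h.fderiv]
  simp [EuclideanSpace.inner_single_right]
  field_simp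
  ring

lemma cigar_laplacian_log {a : ℝ} (ha : 0 < a) (x : EuclideanSpace ℝ (Fin 2)) :
    euclLaplacian (fun y => Real.log ((a + ‖y‖ ^ 2)⁻¹)) x = -4 * a / (a + ‖x‖ ^ 2) ^ 2 := by
  have hw : a + ‖x‖ ^ 2 ≠ 0 := by positivity
  have hn : ‖x‖ ^ 2 = x 0 ^ 2 + x 1 ^ 2 := by
    simp [EuclideanSpace.norm_sq_eq]
  simp only [euclLaplacian, cigar_fderiv_fderiv_log ha, Fin.sum_univ_two]
  field_simp
  rw [hn]
  ring

lemma cigar_deriv_time (t : ℝ) (x : EuclideanSpace ℝ (Fin 2)) :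
    deriv (fun s : ℝ => (Real.exp (-2 * s) + ‖x‖ ^ 2)⁻¹) t
      = 2 * Real.exp (-2 * t) / (Real.exp (-2 * t) + ‖x‖ ^ 2) ^ 2 := by
  have hw : Real.exp (-2 * t) + ‖x‖ ^ 2 ≠ 0 := by positivity
  have h := ((((hasDerivAt_id t).const_mul (-2)).exp).add_const (‖x‖ ^ 2)).inv hw
  refine h.deriv.trans ?_
  simp
  ring

/-- Hamilton's cigar is an eternal solution of the backward Ricci flow: the conformal
factor `u(t,x) = (e^{-2t} + |x|²)^{-1}` satisfies `∂u/∂t = -½ Δ_x (log u)`, with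
`∂u/∂t = 2 e^{-2t}/(e^{-2t} + |x|²)²` and `Δ_x (log u) = -4 e^{-2t}/(e^{-2t} + |x|²)²`. -/
theorem cigar_backward_ricci_flow (t : ℝ) (x : EuclideanSpace ℝ (Fin 2)) :
    deriv (fun s : ℝ => (Real.exp (-2 * s) + ‖x‖ ^ 2)⁻¹) t
        = 2 * Real.exp (-2 * t) / (Real.exp (-2 * t) + ‖x‖ ^ 2) ^ 2
    ∧ euclLaplacian (fun y => Real.log ((Real.exp (-2 * t) + ‖y‖ ^ 2)⁻¹)) x
        = -4 * Real.exp (-2 * t) / (Real.exp (-2 * t) + ‖x‖ ^ 2) ^ 2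
    ∧ deriv (fun s : ℝ => (Real.exp (-2 * s) + ‖x‖ ^ 2)⁻¹) t
        = -(1 / 2) * euclLaplacian (fun y => Real.log ((Real.exp (-2 * t) + ‖y‖ ^ 2)⁻¹)) x := by
  have hL := cigar_laplacian_log (Real.exp_pos (-2 * t)) x
  refine ⟨cigar_deriv_time t x, hL, ?_⟩
  rw [cigar_deriv_time, hL]
  ring
end
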